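/- Let X be an ℕ-valued random variable with E[(1+δ)^X] < ∞ for some δ > 0, and let C(t) = log E[(1+t)^X]. Then X is infinitely dilatable (for every c > 0 there exists an ℕ-valued random variable X_c with log E[(1+t)^{X_c}] = C(ct) for all t in some neighborhood of 0) if and only if X is a mixed Poisson random variable, i.e., there exists a nonnegative real random variable Y with E[e^{δ'Y}] < ∞ for some δ' > 0 such that P(X = k) = E[Y^k e^{-Y}]/k! for every k ∈ ℕ. -/

import Mathlib

/-!
Write `G a x = ∑ₖ a k * x ^ k`. The dilatation identity says `G q (1 + t) = G p (1 + c t)` near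
`t = 0`, and a mixed Poisson law with mixing variable `Y` has generating function
`x ↦ E[e^{(x-1)Y}]`.

If `p` is mixed Poisson with mixing variable `Y`, then the mixed Poisson law with mixing variable
`c Y` is the required dilation (`dilate_mixedPoisson`).

Conversely, let `X_n` be the dilation of `X` by the factor `n`, and let `s ∈ (0, 1)`. The identity
extends by analytic continuation along the real line (`pgf_dilate`), so the law of `X_n / n` has
Laplace transform `E[e^{-s X_n / n}] = G p (1 + n (e^{-s/n} - 1))`. This is at least `G p (1 - s)`
and converges to it as `n → ∞`. The lower bound tends to `1` as `s → 0`, which makes the laws of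
`X_n / n` tight. By Prokhorov's theorem they have a weak cluster point `ν` (`exists_limit_law`),
and `∫ e^{-s y} dν = G p (1 - s)` for `s ∈ (0, 1)`. The left side is the generating function at
`1 - s` of the mixed Poisson law with mixing law `ν`, so that law is `p` (`eq_of_pgf_eq`).
Tonelli's theorem then gives `∫ e^{δ y} dν = G p (1 + δ) < ∞` (`integrable_exp_of_summable`).
-/

open MeasureTheory

/-- The factorial cumulant generating function `C(t) = log E[(1+t)^X]` of the pmf `p`. -/
noncomputable def fcgf (p : ℕ → ℝ) (t : ℝ) : ℝ := Real.log (∑' k : ℕ, p k * (1 + t) ^ k)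

open Filter Topology

/-! ### Probability generating functions -/

/-- The generating function `x ↦ ∑ₖ a k * x ^ k` (with the junk value `0` where the series is not
summable). -/
noncomputable def pgf (a : ℕ → ℝ) (x : ℝ) : ℝ := ∑' k : ℕ, a k * x ^ k

lemma pgf_one {a : ℕ → ℝ} (h1 : HasSum a 1) : pgf a 1 = 1 := by
  simpa [pgf] using h1.tsum_eq

lemma summable_of_abs_le {a : ℕ → ℝ} (h0 : ∀ k, 0 ≤ a k) {R x : ℝ} (hx : |x| ≤ R)
    (hs : Summable fun k => a k * R ^ k) : Summable fun k => a k * x ^ k := by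
  refine Summable.of_norm_bounded hs fun k => ?_
  rw [norm_mul, norm_pow, Real.norm_of_nonneg (h0 k), Real.norm_eq_abs]
  gcongr
  exact h0 k

lemma hasFPowerSeriesOnBall_pgf {a : ℕ → ℝ} (h0 : ∀ k, 0 ≤ a k) {R : ℝ} (hR : 0 < R)
    (hs : Summable fun k => a k * R ^ k) :
    HasFPowerSeriesOnBall (pgf a) (FormalMultilinearSeries.ofScalars ℝ a) 0 (ENNReal.ofReal R) := by
  have hrad : ENNReal.ofReal R ≤ (FormalMultilinearSeries.ofScalars ℝ a).radius := by
    refine FormalMultilinearSeries.le_radius_of_summable_norm (r := R.toNNReal) _ ?_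
    simpa [FormalMultilinearSeries.ofScalars_norm, hR.le, abs_of_nonneg (h0 _)] using hs
  have hpos : 0 < ENNReal.ofReal R := by simpa using hR
  have h := ((FormalMultilinearSeries.ofScalars ℝ a).hasFPowerSeriesOnBall
    (hpos.trans_le hrad)).mono hpos hrad
  have hsum : (FormalMultilinearSeries.ofScalars ℝ a).sum = pgf a := by
    funext x
    exact FormalMultilinearSeries.ofScalars_sum_eq a x
  rwa [hsum] at h

lemma analyticAt_pgf {a : ℕ → ℝ} (h0 : ∀ k, 0 ≤ a k) {R x : ℝ} (hx : |x| < R)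
    (hs : Summable fun k => a k * R ^ k) : AnalyticAt ℝ (pgf a) x := by
  refine (hasFPowerSeriesOnBall_pgf h0 ((abs_nonneg x).trans_lt hx) hs).analyticOnNhd x ?_
  rw [Metric.eball_ofReal]
  simpa using hx

/-- A nonnegative summable sequence is determined by its generating function on `(0, 1)`. -/
lemma eq_of_pgf_eq {a b : ℕ → ℝ} (ha0 : ∀ k, 0 ≤ a k) (hb0 : ∀ k, 0 ≤ b k)
    (ha : Summable a) (hb : Summable b)
    (h : ∀ x ∈ Set.Ioo (0 : ℝ) 1, pgf a x = pgf b x) : a = b := by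
  have ha' : Summable fun k => a k * (1 : ℝ) ^ k := by simpa using ha
  have hb' : Summable fun k => b k * (1 : ℝ) ^ k := by simpa using hb
  have hab : Set.EqOn (pgf a) (pgf b) (Set.Ioo (-1) 1) := by
    refine AnalyticOnNhd.eqOn_of_preconnected_of_eventuallyEq (z₀ := 1 / 2)
      (fun x hx => analyticAt_pgf ha0 (abs_lt.2 hx) ha')
      (fun x hx => analyticAt_pgf hb0 (abs_lt.2 hx) hb') isPreconnected_Ioo (by norm_num) ?_
    filter_upwards [Ioo_mem_nhds (a := (0 : ℝ)) (b := 1) (x := 1 / 2) (by norm_num) (by norm_num)]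
      with x hx using h x hx
  have key := HasFPowerSeriesAt.eq_formalMultilinearSeries_of_eventually
    (hasFPowerSeriesOnBall_pgf ha0 one_pos ha').hasFPowerSeriesAt
    (hasFPowerSeriesOnBall_pgf hb0 one_pos hb').hasFPowerSeriesAt
    (by filter_upwards [Ioo_mem_nhds (a := (-1 : ℝ)) (b := 1) (x := 0) (by norm_num) (by norm_num)]
      with x hx using hab hx)
  exact FormalMultilinearSeries.ofScalars_series_injective ℝ ℝ key

lemma one_lt_pgf {p : ℕ → ℝ} (hp0 : ∀ k, 0 ≤ p k) (hp1 : HasSum p 1) (hne : p 0 < 1) {u : ℝ}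
    (hu : 0 < u) (hs : Summable fun k => p k * (1 + u) ^ k) : 1 < pgf p (1 + u) := by
  -- Bernoulli: `(1 + u) ^ k ≥ 1 + u` for `k ≥ 1`, so the sum is at least `1 + u - u * p 0`.
  have h1 : HasSum (fun k => p k * (1 + u) - (if k = 0 then u * p 0 else 0))
      (1 * (1 + u) - u * p 0) := (hp1.mul_right _).sub (hasSum_ite_eq 0 _)
  have h2 := hasSum_le (fun k => ?_) h1 hs.hasSum
  · have : 0 < u * (1 - p 0) := mul_pos hu (by linarith)
    unfold pgf
    linarith
  · rcases Nat.eq_zero_or_pos k with rfl | hk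
    · simp
      linarith
    · have : (1 + u) ≤ (1 + u) ^ k := le_self_pow₀ (by linarith) hk.ne'
      simp only [hk.ne', if_false, sub_zero]
      exact mul_le_mul_of_nonneg_left this (hp0 k)

/-- Analytic continuation of the dilatation identity: equality of the two logarithms near `t = 0`
forces `E[x^{X_c}] = E[(1 + c(x-1))^X]` at all `x < 1` with `0 < x` and `0 < 1 + c(x-1)`. The case
in which the series of `q` diverges to the right of `1` is excluded because the junk value
`log 0 = 0` would force `X = 0` almost surely. -/
lemma pgf_dilate {p q : ℕ → ℝ} (hp0 : ∀ k, 0 ≤ p k) (hp1 : HasSum p 1) (hne : p 0 < 1)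
    {δ : ℝ} (hδ : 0 < δ) (hmom : Summable (fun k : ℕ => p k * (1 + δ) ^ k))
    (hq0 : ∀ k, 0 ≤ q k) (hq1 : HasSum q 1) {c ε : ℝ} (hc : 0 < c) (hε : 0 < ε)
    (h : ∀ t : ℝ, |t| < ε → fcgf q t = fcgf p (c * t)) {x : ℝ} (hx0 : 0 < x) (hx1 : x < 1)
    (hxc : 0 < 1 + c * (x - 1)) : pgf q x = pgf p (1 + c * (x - 1)) := by
  obtain ⟨t, ht0, ht⟩ : ∃ t : ℝ, 0 < t ∧ t < min ε (δ / c) :=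
    exists_between (lt_min hε (div_pos hδ hc))
  have htε : t < ε := ht.trans_le (min_le_left _ _)
  have htδ : c * t < δ := by
    have := ht.trans_le (min_le_right _ _)
    rwa [lt_div_iff₀ hc, mul_comm] at this
  have hct : 0 < c * t := mul_pos hc ht0
  have hq : Summable fun k => q k * (1 + t) ^ k := by
    by_contra hns
    have h1 := h t (by rwa [abs_of_pos ht0])
    have h2 := one_lt_pgf hp0 hp1 hne hct
      (summable_of_abs_le hp0 (by rw [abs_of_pos] <;> linarith) hmom)
    have h3 := Real.log_pos h2
    simp only [fcgf, tsum_eq_zero_of_not_summable hns, Real.log_zero] at h1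
    simp only [pgf] at h3
    linarith
  have hqan : ∀ y, |y| < 1 + t → AnalyticAt ℝ (pgf q) y := fun y hy => analyticAt_pgf hq0 hy hq
  have hpan : ∀ y, 0 < 1 + c * (y - 1) → y < 1 + t →
      AnalyticAt ℝ (fun y => pgf p (1 + c * (y - 1))) y := by
    intro y hy1 hy2
    have : AnalyticAt ℝ (pgf p) (1 + c * (y - 1)) := by
      refine analyticAt_pgf hp0 ?_ hmom
      rw [abs_of_pos hy1]
      nlinarith
    exact this.comp (f := fun y : ℝ => 1 + c * (y - 1)) (by fun_prop)
  have hnear : pgf q =ᶠ[𝓝 1] fun y => pgf p (1 + c * (y - 1)) := by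
    have e1 : ∀ᶠ y in 𝓝 (1 : ℝ), 0 < pgf q y :=
      (hqan 1 (by rw [abs_one]; linarith)).continuousAt.eventually_const_lt (by simp [pgf_one hq1])
    have e2 : ∀ᶠ y in 𝓝 (1 : ℝ), 0 < pgf p (1 + c * (y - 1)) :=
      (hpan 1 (by simp) (by linarith)).continuousAt.eventually_const_lt (by simp [pgf_one hp1])
    filter_upwards [e1, e2, Metric.ball_mem_nhds 1 hε] with y h1 h2 h3
    have h4 := h (y - 1) (by simpa [Real.dist_eq] using h3)
    simp only [fcgf, add_sub_cancel] at h4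
    exact Real.log_injOn_pos h1 h2 h4
  -- a point `z < x` makes `x` interior to an interval on which both sides are analytic
  obtain ⟨z, hzx, hz0, hzc⟩ : ∃ z, z < x ∧ 0 < z ∧ 0 < 1 + c * (z - 1) := by
    have : ∀ᶠ z in 𝓝[<] x, 0 < z ∧ 0 < 1 + c * (z - 1) := by
      refine nhdsWithin_le_nhds ?_
      have c1 : ContinuousAt (fun z : ℝ => 1 + c * (z - 1)) x := by fun_prop
      exact (eventually_gt_nhds hx0).and (c1.eventually_const_lt hxc)
    obtain ⟨z, hz1, hz2⟩ := (this.and self_mem_nhdsWithin).exists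
    exact ⟨z, hz2, hz1⟩
  have := AnalyticOnNhd.eqOn_of_preconnected_of_eventuallyEq (U := Set.Ioo z (1 + t)) (z₀ := 1)
    (f := pgf q) (g := fun y => pgf p (1 + c * (y - 1)))
    (fun y hy => hqan y (by rw [abs_of_pos] <;> linarith [hy.1, hy.2]))
    (fun y hy => hpan y (by nlinarith [hy.1]) hy.2) isPreconnected_Ioo
    ⟨by linarith, by linarith⟩ hnear
  exact this ⟨hzx, by linarith⟩

/-! ### Mixed Poisson laws -/

/-- The mixed Poisson weights `E[Y^k e^{-Y}] / k!` for `Y` with law `ν`. -/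
noncomputable def mixedPoisson (ν : Measure ℝ) (k : ℕ) : ℝ :=
  (∫ y, y ^ k * Real.exp (-y) ∂ν) / (Nat.factorial k)

lemma hasSum_poisson (x y : ℝ) :
    HasSum (fun k : ℕ => y ^ k * Real.exp (-y) / (Nat.factorial k) * x ^ k)
      (Real.exp ((x - 1) * y)) := by
  have h := (NormedSpace.expSeries_div_hasSum_exp (x * y)).mul_right (Real.exp (-y))
  rw [← Real.exp_eq_exp_ℝ, ← Real.exp_add] at h
  have e1 : (fun k : ℕ => y ^ k * Real.exp (-y) / (Nat.factorial k) * x ^ k)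
      = fun k : ℕ => (x * y) ^ k / (Nat.factorial k) * Real.exp (-y) := by
    funext k
    rw [mul_pow]
    ring
  have e2 : (x - 1) * y = x * y + -y := by ring
  rw [e1, e2]
  exact h

lemma ae_nonneg_of_Iio {ν : Measure ℝ} (h0 : ν (Set.Iio 0) = 0) : ∀ᵐ y ∂ν, 0 ≤ y := by
  rw [ae_iff]
  simpa [Set.Iio] using h0

lemma mixedPoisson_nonneg {ν : Measure ℝ} (h0 : ν (Set.Iio 0) = 0) (k : ℕ) :
    0 ≤ mixedPoisson ν k := by
  refine div_nonneg (integral_nonneg_of_ae ?_) (by positivity)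
  filter_upwards [ae_nonneg_of_Iio h0] with y hy
  simp only [Pi.zero_apply]
  positivity

/-- The generating function of a mixed Poisson law is `x ↦ E[e^{(x-1)Y}]`. -/
lemma hasSum_mixedPoisson {ν : Measure ℝ} (h0 : ν (Set.Iio 0) = 0) {x : ℝ} (hx : 0 ≤ x)
    (hint : Integrable (fun y => Real.exp ((x - 1) * y)) ν) :
    HasSum (fun k => mixedPoisson ν k * x ^ k) (∫ y, Real.exp ((x - 1) * y) ∂ν) := by
  have h := hasSum_integral_of_dominated_convergence (μ := ν)
    (F := fun (k : ℕ) y => y ^ k * Real.exp (-y) / (Nat.factorial k) * x ^ k)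
    (f := fun y => Real.exp ((x - 1) * y))
    (fun (k : ℕ) y => y ^ k * Real.exp (-y) / (Nat.factorial k) * x ^ k)
    (fun k => by fun_prop) (fun k => ?_) (ae_of_all _ fun y => (hasSum_poisson x y).summable)
    (by simpa only [(hasSum_poisson x _).tsum_eq] using hint)
    (ae_of_all _ fun y => hasSum_poisson x y)
  · simp only [integral_mul_const, integral_div] at h
    exact h
  · filter_upwards [ae_nonneg_of_Iio h0] with y hy
    rw [Real.norm_of_nonneg (by positivity)]

lemma integrable_exp_of_le {ν : Measure ℝ} [IsProbabilityMeasure ν] (h0 : ν (Set.Iio 0) = 0)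
    {s s' : ℝ} (hs : s ≤ s') (h : Integrable (fun y => Real.exp (s' * y)) ν) :
    Integrable (fun y => Real.exp (s * y)) ν := by
  refine h.mono' (by fun_prop) ?_
  filter_upwards [ae_nonneg_of_Iio h0] with y hy
  rw [Real.norm_of_nonneg (Real.exp_pos _).le]
  gcongr

lemma integrable_exp_of_nonpos {ν : Measure ℝ} [IsProbabilityMeasure ν] (h0 : ν (Set.Iio 0) = 0)
    {s : ℝ} (hs : s ≤ 0) : Integrable (fun y => Real.exp (s * y)) ν :=
  integrable_exp_of_le h0 hs (by simp)

lemma hasSum_mixedPoisson_one {ν : Measure ℝ} [IsProbabilityMeasure ν] (h0 : ν (Set.Iio 0) = 0) :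
    HasSum (mixedPoisson ν) 1 := by
  simpa using hasSum_mixedPoisson (x := 1) h0 zero_le_one (by simp)

/-- By Tonelli, an exponential moment of a mixed Poisson law gives one of the mixing law. -/
lemma integrable_exp_of_summable {ν : Measure ℝ} [IsProbabilityMeasure ν]
    (h0 : ν (Set.Iio 0) = 0) {x : ℝ} (hx : 0 ≤ x)
    (hs : Summable fun k => mixedPoisson ν k * x ^ k) :
    Integrable (fun y => Real.exp ((x - 1) * y)) ν := by
  have hae := ae_nonneg_of_Iio h0
  -- `y ^ k * e ^ (-y) / k!` is one term of an exponential series of sum `1`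
  have hI : ∀ k : ℕ, Integrable (fun y => y ^ k * Real.exp (-y) / (Nat.factorial k) * x ^ k) ν := by
    intro k
    refine Integrable.mul_const ?_ _
    refine (integrable_const (1 : ℝ)).mono' (by fun_prop) ?_
    filter_upwards [hae] with y hy
    rw [Real.norm_of_nonneg (by positivity)]
    have h1 := hasSum_poisson 1 y
    simp only [one_pow, mul_one, sub_self, zero_mul, Real.exp_zero] at h1
    exact le_hasSum h1 k fun j _ => by positivity
  refine ⟨by fun_prop, ?_⟩
  have hle : ∫⁻ y, ‖Real.exp ((x - 1) * y)‖ₑ ∂ν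
      = ∑' k : ℕ, ENNReal.ofReal (mixedPoisson ν k * x ^ k) := by
    calc ∫⁻ y, ‖Real.exp ((x - 1) * y)‖ₑ ∂ν
        = ∫⁻ y, ∑' k : ℕ, ENNReal.ofReal (y ^ k * Real.exp (-y) / (Nat.factorial k) * x ^ k) ∂ν := by
          refine lintegral_congr_ae ?_
          filter_upwards [hae] with y hy
          rw [← ENNReal.ofReal_tsum_of_nonneg (fun k => by positivity) (hasSum_poisson x y).summable,
            (hasSum_poisson x y).tsum_eq, Real.enorm_of_nonneg (Real.exp_pos _).le]
      _ = ∑' k : ℕ, ENNReal.ofReal (mixedPoisson ν k * x ^ k) := by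
          rw [lintegral_tsum (fun k => by fun_prop)]
          congr 1
          funext k
          rw [← ofReal_integral_eq_lintegral_ofReal (hI k), integral_mul_const, integral_div]
          · rfl
          · filter_upwards [hae] with y hy
            simp only [Pi.zero_apply]
            positivity
  rw [HasFiniteIntegral, hle]
  exact hs.tsum_ofReal_lt_top

/-! ### The limit of the rescaled dilated laws -/

/-- The law of `X / c`, where `X` has pmf `q`. -/
noncomputable def scaledLaw (q : ℕ → ℝ) (c : ℝ) : Measure ℝ :=
  Measure.sum fun k : ℕ => ENNReal.ofReal (q k) • Measure.dirac ((k : ℝ) / c)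

lemma isProbabilityMeasure_scaledLaw {q : ℕ → ℝ} (hq0 : ∀ k, 0 ≤ q k) (hq1 : HasSum q 1) (c : ℝ) :
    IsProbabilityMeasure (scaledLaw q c) := by
  constructor
  simp [scaledLaw, Measure.sum_apply, ← ENNReal.ofReal_tsum_of_nonneg hq0 hq1.summable, hq1.tsum_eq]

lemma scaledLaw_Iio {q : ℕ → ℝ} {c : ℝ} (hc : 0 < c) : scaledLaw q c (Set.Iio 0) = 0 := by
  have : ∀ k : ℕ, ¬ ((k : ℝ) / c < 0) := fun k => not_lt.2 (by positivity)
  simp [scaledLaw, Measure.sum_apply, this]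

lemma integral_scaledLaw {q : ℕ → ℝ} (hq0 : ∀ k, 0 ≤ q k) {c : ℝ} (hc : 0 < c) (s : ℝ) :
    ∫ y, Real.exp (-s * max y 0) ∂(scaledLaw q c) = pgf q (Real.exp (-s / c)) := by
  rw [scaledLaw, integral_sum_dirac (by simp), pgf]
  congr 1
  funext k
  have h : 0 ≤ (k : ℝ) / c := by positivity
  rw [ENNReal.toReal_ofReal (hq0 k), smul_eq_mul, max_eq_left h, ← Real.exp_nat_mul]
  congr 2
  ring

/-- `y ↦ e^{-s y⁺}` as a bounded continuous function, for `s ≥ 0`. -/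
noncomputable def expNegPos (s : ℝ) (hs : 0 ≤ s) : BoundedContinuousFunction ℝ ℝ :=
  BoundedContinuousFunction.ofNormedAddCommGroup (fun y => Real.exp (-s * max y 0))
    (by fun_prop) 1 fun y => by
      rw [Real.norm_of_nonneg (Real.exp_pos _).le, Real.exp_le_one_iff]
      have := mul_nonneg hs (le_max_right y 0)
      linarith

/-- A Markov-type inequality: the tail is controlled by the Laplace transform near `0`. -/
lemma measure_compl_le {μ : Measure ℝ} [IsProbabilityMeasure μ] (h0 : μ (Set.Iio 0) = 0) {s : ℝ}
    (hs : 0 < s) : μ (Set.Icc 0 (1 / s))ᶜ ≤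
      ENNReal.ofReal ((1 - ∫ y, Real.exp (-s * max y 0) ∂μ) / (1 - Real.exp (-1))) := by
  have he : 0 < 1 - Real.exp (-1) := by
    have : Real.exp (-1) < 1 := by simp
    linarith
  have hint : Integrable (fun y => Real.exp (-s * max y 0)) μ := (expNegPos s hs.le).integrable μ
  have hnn : ∀ y, 0 ≤ 1 - Real.exp (-s * max y 0) := fun y => by
    have : Real.exp (-s * max y 0) ≤ 1 := by
      rw [Real.exp_le_one_iff]
      have := mul_nonneg hs.le (le_max_right y 0)
      linarith
    linarith
  have hM := mul_meas_ge_le_integral_of_nonneg (ae_of_all μ hnn)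
    ((integrable_const (1 : ℝ)).sub hint) (1 - Real.exp (-1))
  rw [integral_sub (integrable_const _) hint] at hM
  simp only [integral_const, probReal_univ, smul_eq_mul, mul_one] at hM
  rw [← ofReal_measureReal]
  refine ENNReal.ofReal_le_ofReal ?_
  rw [le_div_iff₀ he, mul_comm]
  refine le_trans (mul_le_mul_of_nonneg_left ?_ he.le) hM
  refine ENNReal.toReal_mono (measure_ne_top _ _) (measure_mono_ae ?_)
  filter_upwards [ae_nonneg_of_Iio h0] with y hy hyc
  have hy1 : 1 / s < y := by
    by_contra hcon
    exact hyc ⟨hy, not_lt.1 hcon⟩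
  rw [div_lt_iff₀ hs] at hy1
  change 1 - Real.exp (-1) ≤ 1 - Real.exp (-s * max y 0)
  rw [max_eq_left hy]
  have : Real.exp (-s * y) ≤ Real.exp (-1) := Real.exp_le_exp.2 (by linarith)
  linarith

lemma tendsto_mul_exp_sub_one (s : ℝ) :
    Tendsto (fun n : ℕ => 1 + ((n : ℝ) + 1) * (Real.exp (-s / ((n : ℝ) + 1)) - 1)) atTop
      (𝓝 (1 - s)) := by
  have hc : Tendsto (fun n : ℕ => ‖(n : ℝ) + 1‖) atTop atTop :=
    tendsto_norm_atTop_atTop.comp (tendsto_natCast_atTop_atTop.atTop_add tendsto_const_nhds)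
  have h := (Real.hasDerivAt_exp 0).hasFDerivAt.lim (-s) hc
  have h' := h.const_add 1
  simp only [zero_add, Real.exp_zero, smul_eq_mul] at h'
  convert h' using 2
  · rw [div_eq_inv_mul]
  · simp
    ring

lemma pgf_mono {p : ℕ → ℝ} (hp0 : ∀ k, 0 ≤ p k) (hp : Summable p) {x y : ℝ} (hx : 0 ≤ x)
    (hxy : x ≤ y) (hy : y ≤ 1) : pgf p x ≤ pgf p y := by
  have hs : Summable fun k => p k * (1 : ℝ) ^ k := by simpa using hp
  refine Summable.tsum_le_tsum (fun k => mul_le_mul_of_nonneg_left (by gcongr) (hp0 k))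
    (summable_of_abs_le hp0 ?_ hs) (summable_of_abs_le hp0 ?_ hs) <;>
  · rw [abs_of_nonneg] <;> linarith

/-- Prokhorov extraction: probability laws on `[0, ∞)` whose Laplace transforms at `s ∈ (0, 1)` are
at least `F s`, with `F s → 1` as `s → 0`, and converge to `F s`, have a weak cluster point with
Laplace transform `F` on `(0, 1)`. -/
lemma exists_limit_law {F : ℝ → ℝ} (hF1 : Tendsto F (𝓝[>] 0) (𝓝 1)) (μ : ℕ → Measure ℝ)
    (hμ : ∀ n, IsProbabilityMeasure (μ n)) (hμ0 : ∀ n, μ n (Set.Iio 0) = 0)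
    (hle : ∀ s ∈ Set.Ioo (0 : ℝ) 1, ∀ n, F s ≤ ∫ y, Real.exp (-s * max y 0) ∂(μ n))
    (hlim : ∀ s ∈ Set.Ioo (0 : ℝ) 1,
      Tendsto (fun n => ∫ y, Real.exp (-s * max y 0) ∂(μ n)) atTop (𝓝 (F s))) :
    ∃ ν : Measure ℝ, IsProbabilityMeasure ν ∧ ν (Set.Iio 0) = 0 ∧
      ∀ s ∈ Set.Ioo (0 : ℝ) 1, ∫ y, Real.exp (-s * y) ∂ν = F s := by
  let P : ℕ → ProbabilityMeasure ℝ := fun n => ⟨μ n, hμ n⟩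
  have htight : IsTightMeasureSet {((m : ProbabilityMeasure ℝ) : Measure ℝ) | m ∈ Set.range P} := by
    rw [isTightMeasureSet_iff_exists_isCompact_measure_compl_le]
    intro ε hε
    have h1 : Tendsto (fun s => ENNReal.ofReal ((1 - F s) / (1 - Real.exp (-1)))) (𝓝[>] 0)
        (𝓝 0) := by
      have := ENNReal.tendsto_ofReal
        ((tendsto_const_nhds (x := (1 : ℝ)).sub hF1).div_const (1 - Real.exp (-1)))
      simpa using this
    obtain ⟨s, hs1, hs2⟩ := ((h1.eventually_lt_const hε).and
      (Ioo_mem_nhdsGT (zero_lt_one' ℝ))).exists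
    refine ⟨Set.Icc 0 (1 / s), isCompact_Icc, ?_⟩
    rintro _ ⟨_, ⟨n, rfl⟩, rfl⟩
    have := hμ n
    refine (measure_compl_le (hμ0 n) hs2.1).trans (le_trans ?_ hs1.le)
    refine ENNReal.ofReal_le_ofReal ?_
    have he : 0 ≤ 1 - Real.exp (-1) := by simp
    have := hle s hs2 n
    gcongr
  obtain ⟨ρ, -, hρ⟩ := (isCompact_closure_of_isTightMeasureSet htight).ultrafilter_le_nhds
    ((hyperfilter ℕ : Ultrafilter ℕ).map P) (by
      rw [le_principal_iff]
      exact Filter.mem_map.2 (univ_mem' fun n => subset_closure ⟨n, rfl⟩))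
  have hρ' : Tendsto P (hyperfilter ℕ) (𝓝 ρ) := hρ
  have hmeas : Measurable fun y : ℝ => max y 0 := by fun_prop
  -- taking positive parts makes the law live on `[0, ∞)` and keeps the transforms
  refine ⟨(ρ : Measure ℝ).map fun y => max y 0,
    Measure.isProbabilityMeasure_map hmeas.aemeasurable, ?_, fun s hs => ?_⟩
  · rw [Measure.map_apply hmeas measurableSet_Iio]
    convert measure_empty (μ := (ρ : Measure ℝ))
    ext y
    simp
  · rw [integral_map hmeas.aemeasurable (by fun_prop)]
    have h1 := ProbabilityMeasure.tendsto_iff_forall_integral_tendsto.1 hρ' (expNegPos s hs.1.le)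
    have h2 := (hlim s hs).mono_left (Nat.hyperfilter_le_atTop)
    exact tendsto_nhds_unique h1 h2

/-! ### The two directions -/

/-- If `X` is dilatable by every factor `n + 1`, the laws of `X_{n+1} / (n + 1)` accumulate at a
mixing law for `X`. -/
lemma exists_mixing {p : ℕ → ℝ} (hp0 : ∀ k, 0 ≤ p k) (hp1 : HasSum p 1) (hne : p 0 < 1)
    {δ : ℝ} (hδ : 0 < δ) (hmom : Summable (fun k : ℕ => p k * (1 + δ) ^ k))
    (h : ∀ c : ℝ, 0 < c → ∃ q : ℕ → ℝ, (∀ k, 0 ≤ q k) ∧ HasSum q 1 ∧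
        ∃ ε > 0, ∀ t : ℝ, |t| < ε → fcgf q t = fcgf p (c * t)) :
    ∃ ν : Measure ℝ, IsProbabilityMeasure ν ∧ ν (Set.Iio 0) = 0 ∧ p = mixedPoisson ν := by
  have hcpos : ∀ n : ℕ, 0 < (n : ℝ) + 1 := fun n => by positivity
  choose q hq0 hq1 ε hε hq using fun n : ℕ => h ((n : ℝ) + 1) (hcpos n)
  have hcont : ∀ x, |x| < 1 + δ → ContinuousAt (pgf p) x := fun x hx =>
    (analyticAt_pgf hp0 hx hmom).continuousAt
  have hlow : ∀ (s : ℝ) (n : ℕ),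
      1 - s ≤ 1 + ((n : ℝ) + 1) * (Real.exp (-s / ((n : ℝ) + 1)) - 1) := by
    intro s n
    have h1 := Real.add_one_le_exp (-s / ((n : ℝ) + 1))
    have h2 : ((n : ℝ) + 1) * (-s / ((n : ℝ) + 1)) = -s := mul_div_cancel₀ _ (hcpos n).ne'
    nlinarith [hcpos n]
  have hlap : ∀ s ∈ Set.Ioo (0 : ℝ) 1, ∀ n : ℕ,
      ∫ y, Real.exp (-s * max y 0) ∂(scaledLaw (q n) ((n : ℝ) + 1))
        = pgf p (1 + ((n : ℝ) + 1) * (Real.exp (-s / ((n : ℝ) + 1)) - 1)) := by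
    intro s hs n
    rw [integral_scaledLaw (hq0 n) (hcpos n)]
    refine pgf_dilate hp0 hp1 hne hδ hmom (hq0 n) (hq1 n) (hcpos n) (hε n) (hq n)
      (Real.exp_pos _) ?_ ?_
    · rw [Real.exp_lt_one_iff]
      exact div_neg_of_neg_of_pos (by linarith [hs.1]) (hcpos n)
    · linarith [hlow s n, hs.2]
  have key : ∃ ν : Measure ℝ, IsProbabilityMeasure ν ∧ ν (Set.Iio 0) = 0 ∧
      ∀ s ∈ Set.Ioo (0 : ℝ) 1, ∫ y, Real.exp (-s * y) ∂ν = pgf p (1 - s) := by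
    refine exists_limit_law (F := fun s => pgf p (1 - s)) ?_
      (fun n => scaledLaw (q n) ((n : ℝ) + 1))
      (fun n => isProbabilityMeasure_scaledLaw (hq0 n) (hq1 n) _)
      (fun n => scaledLaw_Iio (hcpos n)) (fun s hs n => ?_) (fun s hs => ?_)
    · have h1 : ContinuousAt (fun s => pgf p (1 - s)) 0 := by
        refine ContinuousAt.comp (g := pgf p) (f := fun s : ℝ => 1 - s) ?_ (by fun_prop)
        exact hcont _ (by simpa using hδ)
      have h2 := h1.tendsto
      simp only [sub_zero, pgf_one hp1] at h2
      exact h2.mono_left nhdsWithin_le_nhds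
    · rw [hlap s hs n]
      refine pgf_mono hp0 hp1.summable (by linarith [hs.2]) (hlow s n) ?_
      have : Real.exp (-s / ((n : ℝ) + 1)) ≤ 1 := by
        rw [Real.exp_le_one_iff]
        exact div_nonpos_of_nonpos_of_nonneg (by linarith [hs.1]) (hcpos n).le
      nlinarith [hcpos n]
    · simp only [hlap s hs]
      refine (hcont (1 - s) ?_).tendsto.comp (tendsto_mul_exp_sub_one s)
      rw [abs_of_pos] <;> linarith [hs.1, hs.2]
  obtain ⟨ν, hν, hν0, hνF⟩ := key
  refine ⟨ν, hν, hν0, ?_⟩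
  refine eq_of_pgf_eq hp0 (mixedPoisson_nonneg hν0) hp1.summable
    (hasSum_mixedPoisson_one hν0).summable fun x hx => ?_
  have h1 := hνF (1 - x) ⟨by linarith [hx.2], by linarith [hx.1]⟩
  simp only [sub_sub_cancel, neg_sub] at h1
  rw [← h1]
  exact (hasSum_mixedPoisson hν0 hx.1.le
    (integrable_exp_of_nonpos hν0 (by linarith [hx.2]))).tsum_eq.symm

/-- A law with all its mass at `0` is mixed Poisson with mixing variable `0`. -/
lemma eq_mixedPoisson_dirac {p : ℕ → ℝ} (hp0 : ∀ k, 0 ≤ p k) (hp1 : HasSum p 1) (h : 1 ≤ p 0) :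
    p = mixedPoisson (Measure.dirac 0) := by
  funext k
  have hm : mixedPoisson (Measure.dirac 0) k = (0 : ℝ) ^ k / (Nat.factorial k) := by
    simp [mixedPoisson]
  rw [hm]
  rcases Nat.eq_zero_or_pos k with rfl | hk
  · simpa using le_antisymm (le_hasSum hp1 0 fun j _ => hp0 j) h
  · have h1 := sum_le_hasSum {0, k} (fun j _ => hp0 j) hp1
    rw [Finset.sum_pair hk.ne] at h1
    rw [zero_pow hk.ne', zero_div]
    exact le_antisymm (by linarith) (hp0 k)

/-- A mixed Poisson law is dilated by scaling its mixing variable. -/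
lemma dilate_mixedPoisson {ν : Measure ℝ} [IsProbabilityMeasure ν] (h0 : ν (Set.Iio 0) = 0)
    {δ' : ℝ} (hδ' : 0 < δ') (hint : Integrable (fun y => Real.exp (δ' * y)) ν) {c : ℝ}
    (hc : 0 < c) : ∃ q : ℕ → ℝ, (∀ k, 0 ≤ q k) ∧ HasSum q 1 ∧
      ∃ ε > 0, ∀ t : ℝ, |t| < ε → fcgf q t = fcgf (mixedPoisson ν) (c * t) := by
  have hmeas : Measurable fun y : ℝ => c * y := by fun_prop
  have hprob : IsProbabilityMeasure (ν.map fun y => c * y) :=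
    Measure.isProbabilityMeasure_map hmeas.aemeasurable
  have h0c : ν.map (fun y => c * y) (Set.Iio 0) = 0 := by
    rw [Measure.map_apply hmeas measurableSet_Iio]
    convert h0 using 2
    ext y
    simp [hc]
  refine ⟨mixedPoisson (ν.map fun y => c * y), mixedPoisson_nonneg h0c,
    hasSum_mixedPoisson_one h0c, min 1 (min (1 / c) (δ' / c)), by positivity, fun t ht => ?_⟩
  simp only [lt_min_iff, lt_div_iff₀ hc] at ht
  obtain ⟨ht1, ht2, ht3⟩ := ht
  have hct : |c * t| = |t| * c := by rw [abs_mul, abs_of_pos hc, mul_comm]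
  have ht1' := (abs_lt.1 ht1).1
  have ht2' := (abs_lt.1 (hct.trans_lt ht2)).1
  have ht3' := (abs_lt.1 (hct.trans_lt ht3)).2
  have hi : Integrable (fun y => Real.exp (c * t * y)) ν :=
    integrable_exp_of_le h0 (by linarith) hint
  have e : (fun y => Real.exp (c * t * y)) = fun y => Real.exp (t * (c * y)) := by
    funext y
    ring_nf
  have h1 := hasSum_mixedPoisson (x := 1 + c * t) h0 (by linarith) (by simpa using hi)
  have h2 := hasSum_mixedPoisson (x := 1 + t) h0c (by linarith) (by
    simp only [add_sub_cancel_left]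
    rw [integrable_map_measure (by fun_prop) hmeas.aemeasurable]
    rw [e] at hi
    exact hi)
  simp only [add_sub_cancel_left] at h1 h2
  rw [integral_map hmeas.aemeasurable (by fun_prop), ← e] at h2
  rw [fcgf, fcgf, h1.tsum_eq, h2.tsum_eq]

/-- **Infinite dilatability characterizes Poisson mixtures.**
Let `X` be `ℕ`-valued with pmf `p` and `E[(1+δ)^X] < ∞` for some `δ > 0`. Then `X` is
infinitely dilatable (for every `c > 0` there is an `ℕ`-valued `X_c` with
`log E[(1+t)^{X_c}] = C(ct)` near `0`) if and only if `X` is a mixed Poisson random variable: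
there is a nonnegative real random variable `Y` (with law `ν`) having `E[e^{δ'Y}] < ∞` for
some `δ' > 0` such that `P(X = k) = E[Y^k e^{-Y}]/k!` for every `k`. -/
theorem infinitely_dilatable_iff_mixed_poisson
    (p : ℕ → ℝ) (hp0 : ∀ k, 0 ≤ p k) (hp1 : HasSum p 1)
    (δ : ℝ) (hδ : 0 < δ) (hmom : Summable (fun k : ℕ => p k * (1 + δ) ^ k)) :
    (∀ c : ℝ, 0 < c → ∃ q : ℕ → ℝ, (∀ k, 0 ≤ q k) ∧ HasSum q 1 ∧
        ∃ ε > 0, ∀ t : ℝ, |t| < ε → fcgf q t = fcgf p (c * t))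
    ↔ (∃ ν : Measure ℝ, IsProbabilityMeasure ν ∧ ν (Set.Iio 0) = 0 ∧
        (∃ δ' : ℝ, 0 < δ' ∧ Integrable (fun y => Real.exp (δ' * y)) ν) ∧
        ∀ k : ℕ, p k = (∫ y, y ^ k * Real.exp (-y) ∂ν) / (Nat.factorial k)) := by
  constructor
  · intro h
    obtain ⟨ν, hν, hν0, hpν⟩ :
        ∃ ν : Measure ℝ, IsProbabilityMeasure ν ∧ ν (Set.Iio 0) = 0 ∧ p = mixedPoisson ν := by
      rcases lt_or_ge (p 0) 1 with hne | hne
      · exact exists_mixing hp0 hp1 hne hδ hmom h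
      · exact ⟨Measure.dirac 0, inferInstance, by simp, eq_mixedPoisson_dirac hp0 hp1 hne⟩
    refine ⟨ν, hν, hν0, ⟨δ, hδ, ?_⟩, fun k => congrFun hpν k⟩
    rw [hpν] at hmom
    simpa using integrable_exp_of_summable hν0 (by linarith) hmom
  · rintro ⟨ν, hν, hν0, ⟨δ', hδ', hint⟩, hpν⟩ c hc
    obtain rfl : p = mixedPoisson ν := funext hpν
    exact dilate_mixedPoisson hν0 hδ' hint hc
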